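/- arXiv:1809.02484 — 2 statements merged into one kernel-verified Lean document; each statement's English description precedes it below -/
import Mathlib

section
/- Let k be a field, G a group, and let V and W be representations of G on k-vector spaces. Equip Hom_k(W, V) with the G-action (g·f)(w) := g·(f(g⁻¹·w)) (the conjugation action). Then for every n ≥ 0 there is a k-linear isomorphism Ext^n(W, V) ≅ H^n(G, Hom_k(W, V)), where Ext is taken in the abelian category of k-linear representations of G and H^n denotes group cohomology of the conjugation representation. -/
open CategoryTheory

namespace Stmt7Aux

open MonoidalCategory Limits

variable {k : Type} [Field k] {G : Type} [Group G]

instance ihom_preservesEpi (W : Rep.{0} k G) : (ihom W).PreservesEpimorphisms where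
  preserves {X Y} f hf := by
    rw [Rep.epi_iff_surjective] at hf ⊢
    intro (g : W →ₗ[k] Y)
    obtain ⟨s, hs⟩ := f.hom.toLinearMap.exists_rightInverse_of_surjective
      (LinearMap.range_eq_top.2 hf)
    refine ⟨(s ∘ₗ g : W →ₗ[k] X), ?_⟩
    change f.hom.toLinearMap ∘ₗ (s ∘ₗ g) = g
    rw [← LinearMap.comp_assoc, hs, LinearMap.id_comp]

instance tensorLeft_preservesMono (W : Rep.{0} k G) : (tensorLeft W).PreservesMonomorphisms where
  preserves {X Y} f hf := by
    rw [Rep.mono_iff_injective] at hf ⊢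
    exact Module.Flat.lTensor_preserves_injective_linearMap (M := W) f.hom.toLinearMap hf

instance (W : Rep.{0} k G) : PreservesFiniteColimits (tensorLeft W) :=
  ⟨fun _ _ _ => (ihom.adjunction W).leftAdjoint_preservesColimits.preservesColimitsOfShape⟩

instance (W : Rep.{0} k G) : (tensorLeft W).PreservesHomology := by
  have h := (Functor.preservesFiniteColimits_iff_forall_exact_map_and_epi (tensorLeft W)).1
    inferInstance
  refine ((tensorLeft W).exact_tfae.out 0 2 rfl rfl).1 fun S hS => ?_
  have := hS.mono_f
  exact { exact := (h S hS).1
          mono_f := inferInstanceAs (Mono ((tensorLeft W).map S.f))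
          epi_g := (h S hS).2 }

noncomputable def res (W : Rep.{0} k G) : ProjectiveResolution W where
  complex := ((tensorLeft W).mapHomologicalComplex _).obj (Rep.barResolution k G).complex
  projective n := (ihom.adjunction W).map_projective _ ((Rep.barResolution k G).projective n)
  π := ((tensorLeft W).mapHomologicalComplex _).map (Rep.barResolution k G).π ≫
    (HomologicalComplex.singleMapHomologicalComplex (tensorLeft W) _ 0).hom.app _ ≫
    (ChainComplex.single₀ _).map (ρ_ W).hom
  quasiIso := by
    have : QuasiIso (((tensorLeft W).mapHomologicalComplex (.down ℕ)).map
      (Rep.barResolution k G).π) := inferInstance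
    infer_instance

noncomputable def cplxIso (V W : Rep.{0} k G) (P : ChainComplex (Rep.{0} k G) ℕ) :
    ChainComplex.linearYonedaObj (((tensorLeft W).mapHomologicalComplex _).obj P) k V ≅
      P.linearYonedaObj k ((ihom W).obj V) :=
  HomologicalComplex.Hom.isoOfComponents
    (fun i => (Rep.MonoidalClosed.linearHomEquiv W (P.X i) V).toModuleIso) (by
      intro i j hij
      ext f
      exact ((ihom.adjunction W).homEquiv_naturality_left (P.d j i) f).symm)

end Stmt7Aux

/-- For representations `V, W` of a group `G` over a field `k`, and every
`n ≥ 0`, there is a `k`-linear isomorphism `Ext^n(W, V) ≅ H^n(G, Hom_k(W, V))`, where `Ext`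
is taken in the abelian category `Rep k G` and the coefficients carry the conjugation action
`(g·f)(w) = g·f(g⁻¹·w)`. -/
theorem stmt7 {k : Type} [Field k] {G : Type} [Group G]
    (V W : Rep k G) (n : ℕ) :
    Nonempty
      ((((Ext k (Rep k G) n).obj (Opposite.op W)).obj V) ≃ₗ[k]
        (groupCohomology (Rep.of (Representation.linHom W.ρ V.ρ)) n)) := by
  exact ⟨((Stmt7Aux.res W).isoExt n V ≪≫
    (HomologicalComplex.homologyFunctor _ _ n).mapIso (Stmt7Aux.cplxIso V W _) ≪≫
    (groupCohomologyIso (Rep.of (Representation.linHom W.ρ V.ρ)) n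
      (Rep.barResolution k G)).symm).toLinearEquiv⟩
end

section
/- Let r ≥ 1, s ≥ 0, and let γ : {0, 1, …, s} → {1, …, r} be any function (a path of length s in the complete directed graph on r vertices). Then there exist an integer t with t ≥ ⌊s/r⌋ and indices a₁ < b₁ ≤ a₂ < b₂ ≤ ⋯ ≤ a_t < b_t with 0 ≤ a₁ and b_t ≤ s, such that for each 1 ≤ k ≤ t: b_k − a_k ≤ r, γ(a_k) = γ(b_k), and γ is injective on {a_k, a_k + 1, …, b_k − 1}. In other words, every path of length s on r vertices contains at least ⌊s/r⌋ pairwise disjoint consecutive subpaths, each of which is a simple closed path of length at most r. -/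
theorem block_cycle (r : ℕ) (γ : ℕ → Fin r) (m : ℕ) :
    ∃ a b : ℕ, m ≤ a ∧ a < b ∧ b ≤ m + r ∧ γ a = γ b ∧
      ∀ x y : ℕ, a ≤ x → x < b → a ≤ y → y < b → γ x = γ y → x = y := by
  classical
  have hex : ∃ b : ℕ, b ≤ m + r ∧ ∃ a, m ≤ a ∧ a < b ∧ γ a = γ b := by
    obtain ⟨i, j, hij, h⟩ := Fintype.exists_ne_map_eq_of_card_lt
      (fun i : Fin (r + 1) => γ (m + i)) (by simp)
    have hne : (i : ℕ) ≠ j := fun h => hij (Fin.ext h)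
    have hi := i.2
    have hj := j.2
    rcases lt_or_gt_of_ne hne with h1 | h1
    · exact ⟨m + j, by omega, m + i, by omega, by omega, h⟩
    · exact ⟨m + i, by omega, m + j, by omega, by omega, h.symm⟩
  obtain ⟨hb, a, ha, hab, h⟩ := Nat.find_spec hex
  refine ⟨a, Nat.find hex, ha, hab, hb, h, ?_⟩
  intro x y hx hxb hy hyb hxy
  rcases lt_trichotomy x y with h1 | h1 | h1
  · exact absurd ⟨by omega, x, by omega, h1, hxy⟩ (Nat.find_min hex hyb)
  · exact h1
  · exact absurd ⟨by omega, y, by omega, h1, hxy.symm⟩ (Nat.find_min hex hxb)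

/-- Every path `γ : {0,…,s} → {1,…,r}` in the complete directed graph on
`r` vertices contains at least `⌊s/r⌋` pairwise disjoint consecutive subpaths, each a simple
closed path of length at most `r`: there are `t ≥ ⌊s/r⌋` and indices
`a₁ < b₁ ≤ a₂ < b₂ ≤ ⋯ ≤ a_t < b_t ≤ s` with `b_k − a_k ≤ r`, `γ(a_k) = γ(b_k)`, and `γ`
injective on `{a_k, …, b_k − 1}` for each `k`. -/
theorem stmt13 (r s : ℕ) (hr : 1 ≤ r) (γ : ℕ → Fin r) :
    ∃ (t : ℕ) (a b : Fin t → ℕ),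
      s / r ≤ t ∧
      (∀ k : Fin t, a k < b k) ∧
      (∀ k l : Fin t, k < l → b k ≤ a l) ∧
      (∀ k : Fin t, b k ≤ s) ∧
      (∀ k : Fin t, b k - a k ≤ r) ∧
      (∀ k : Fin t, γ (a k) = γ (b k)) ∧
      (∀ (k : Fin t) (x y : ℕ), a k ≤ x → x < b k → a k ≤ y → y < b k →
        γ x = γ y → x = y) := by
  choose a b h1 h2 h3 h4 h5 using block_cycle r γ
  refine ⟨s / r, fun k => a (k * r), fun k => b (k * r), le_rfl, fun k => h2 _, ?_, ?_, ?_,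
    fun k => h4 _, fun k => h5 _⟩
  · intro k l hkl
    have e : ((k : ℕ) + 1) * r ≤ l * r := Nat.mul_le_mul_right r hkl
    have := h3 (k * r)
    have := h1 (l * r)
    simp only
    rw [Nat.add_mul] at e
    omega
  · intro k
    have e : ((k : ℕ) + 1) * r ≤ s / r * r := Nat.mul_le_mul_right r k.2
    have := h3 (k * r)
    have := Nat.div_mul_le_self s r
    simp only
    rw [Nat.add_mul] at e
    omega
  · intro k
    have := h3 (k * r)
    have := h1 (k * r)
    simp only
    omega
end
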